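/- arXiv:2002.08824 — 4 statements merged into one kernel-verified Lean document; each statement's English description precedes it below -/
import Mathlib

section
/- Let C be an [n,k] linear code over F_q. Then C is chained if and only if its associated matroid M_C is chained. -/
open Finset
open scoped Classical

noncomputable section

/-- The rank in the matroid `M_C`: `r(X)` is the rank of the column submatrix `H_X`. -/
def colRank {F : Type*} [Field F] {m n : ℕ} (H : Matrix (Fin m) (Fin n) F)
    (X : Finset (Fin n)) : ℕ :=
  Module.finrank F (Submodule.span F ((fun j i => H i j) '' (X : Set (Fin n))))

/-- The nullity function of the matroid `M_C`: `n(X) = |X| - r(X)`. -/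
def nulC {F : Type*} [Field F] {m n : ℕ} (H : Matrix (Fin m) (Fin n) F)
    (X : Finset (Fin n)) : ℕ :=
  X.card - colRank H X

/-- The support of a word. -/
def supp {F : Type*} [Field F] {n : ℕ} (c : Fin n → F) : Finset (Fin n) :=
  Finset.univ.filter (fun i => c i ≠ 0)

/-- The support of a subcode. -/
def suppD {F : Type*} [Field F] {n : ℕ} (D : Submodule F (Fin n → F)) : Finset (Fin n) :=
  Finset.univ.filter (fun i => ∃ c ∈ D, c i ≠ 0)

/-- The weight of a subcode: the cardinality of its support. -/
def wt {F : Type*} [Field F] {n : ℕ} (D : Submodule F (Fin n → F)) : ℕ := (suppD D).card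

/-- The subcode `C(X) = {c ∈ C : Supp(c) ⊆ X}`. -/
def codeRestrict {F : Type*} [Field F] {n : ℕ} (C : Submodule F (Fin n → F))
    (X : Finset (Fin n)) : Submodule F (Fin n → F) where
  carrier := {c | c ∈ C ∧ ∀ i ∉ X, c i = 0}
  add_mem' := by
    rintro a b ⟨ha, ha0⟩ ⟨hb, hb0⟩
    exact ⟨C.add_mem ha hb, fun i hi => by simp [Pi.add_apply, ha0 i hi, hb0 i hi]⟩
  zero_mem' := ⟨C.zero_mem, fun i _ => rfl⟩
  smul_mem' := by
    rintro r a ⟨ha, ha0⟩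
    exact ⟨C.smul_mem r ha, fun i hi => by simp [Pi.smul_apply, ha0 i hi]⟩

/-- The code defined by the parity check matrix `H`: `C = {x : H x = 0}`. -/
def codeOf {F : Type*} [Field F] {m n : ℕ} (H : Matrix (Fin m) (Fin n) F) :
    Submodule F (Fin n → F) :=
  LinearMap.ker H.mulVecLin

/-- The `r`-th generalized Hamming weight of a code `C`. -/
def dC {F : Type*} [Field F] {n : ℕ} (C : Submodule F (Fin n → F)) (r : ℕ) : ℕ :=
  sInf {w | ∃ D : Submodule F (Fin n → F), D ≤ C ∧ Module.finrank F D = r ∧ wt D = w}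

/-- `D` computes `d_r(C)`: `D ⊆ C`, `dim D = r` and `wt(D) = d_r(C)`. -/
def Computes {F : Type*} [Field F] {n : ℕ} (C : Submodule F (Fin n → F)) (r : ℕ)
    (D : Submodule F (Fin n → F)) : Prop :=
  D ≤ C ∧ Module.finrank F D = r ∧ wt D = dC C r

end
noncomputable section

/-- The code `C` is chained: there is a chain `D_1 ⊆ ⋯ ⊆ D_k` of subcodes with
`dim D_i = i` and `wt(D_i) = d_i(C)`. -/
def ChainedCode {F : Type*} [Field F] {n : ℕ} (C : Submodule F (Fin n → F)) (k : ℕ) : Prop :=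
  ∃ D : Fin k → Submodule F (Fin n → F), Monotone D ∧
    ∀ i : Fin k, D i ≤ C ∧ Module.finrank F (D i) = (i : ℕ) + 1 ∧
      wt (D i) = dC C ((i : ℕ) + 1)

/-- The generalized Hamming weights of the matroid `M_C`. -/
def dM {F : Type*} [Field F] {m n : ℕ} (H : Matrix (Fin m) (Fin n) F) (i : ℕ) : ℕ :=
  sInf {c | ∃ X, nulC H X = i ∧ X.card = c}

/-- The matroid `M_C` is chained: there is a chain `σ_1 ⊆ ⋯ ⊆ σ_k` with `σ_i ∈ N_i` and
`|σ_i| = d_i(M_C)`. -/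
def ChainedMatroidC {F : Type*} [Field F] {m n : ℕ} (H : Matrix (Fin m) (Fin n) F)
    (k : ℕ) : Prop :=
  ∃ σ : Fin k → Finset (Fin n), Monotone σ ∧
    ∀ i : Fin k, (nulC H (σ i) = (i : ℕ) + 1 ∧
        ∀ Y ⊆ σ i, nulC H Y = (i : ℕ) + 1 → Y = σ i) ∧
      (σ i).card = dM H ((i : ℕ) + 1)

/-! The maps `D ↦ Supp(D)` and `X ↦ C(X)` form a Galois connection between subcodes of `C` and
sets of coordinates. Rank-nullity, applied to `H` on the vectors supported in `X`, shows that
`n(X) = dim C(X)`. Since deleting an element lowers the nullity by at most one, the support of an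
`r`-dimensional subcode contains a set of nullity `r`. Hence both hierarchies of weights agree, and
the two maps carry optimal subcodes to optimal sets and back; being monotone, they carry chains to
chains. -/

theorem finrank_map_add_finrank_inf_ker {K V W : Type*} [DivisionRing K] [AddCommGroup V]
    [Module K V] [AddCommGroup W] [Module K W] (f : V →ₗ[K] W) (U : Submodule K V)
    [FiniteDimensional K U] :
    Module.finrank K (U.map f) + Module.finrank K ↥(U ⊓ LinearMap.ker f) =
      Module.finrank K U := by
  rw [← (f.domRestrict U).finrank_range_add_finrank_ker, LinearMap.range_domRestrict,
    LinearMap.ker_domRestrict, ← Submodule.map_comap_subtype, Submodule.finrank_map_subtype_eq]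

theorem map_mulVecLin_spanSubset {R ι κ : Type*} [CommSemiring R] [Fintype κ]
    (A : Matrix ι κ R) (s : Set κ) :
    (Pi.spanSubset R s).map A.mulVecLin = Submodule.span R (A.col '' s) := by
  rw [Pi.spanSubset, Submodule.map_span, Set.image_image]
  simp only [Pi.basisFun_apply, Matrix.mulVecLin_apply, Matrix.mulVec_single_one]

section Code

variable {F : Type*} [Field F] {n : ℕ} {C D : Submodule F (Fin n → F)} {X : Finset (Fin n)}

theorem suppD_subset_iff : suppD D ⊆ X ↔ ∀ c ∈ D, ∀ i ∉ X, c i = 0 := by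
  simp only [suppD, Finset.subset_iff, Finset.mem_filter, Finset.mem_univ, true_and]
  grind

theorem le_codeRestrict_iff : D ≤ codeRestrict C X ↔ D ≤ C ∧ suppD D ⊆ X := by
  rw [suppD_subset_iff]
  exact forall₂_and

theorem codeRestrict_le : codeRestrict C X ≤ C :=
  (le_codeRestrict_iff.1 le_rfl).1

theorem suppD_codeRestrict_subset : suppD (codeRestrict C X) ⊆ X :=
  (le_codeRestrict_iff.1 le_rfl).2

theorem le_codeRestrict_suppD (hD : D ≤ C) : D ≤ codeRestrict C (suppD D) :=
  le_codeRestrict_iff.2 ⟨hD, Subset.rfl⟩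

theorem codeRestrict_mono (C : Submodule F (Fin n → F)) : Monotone (codeRestrict C) :=
  fun _ _ hXY => le_codeRestrict_iff.2 ⟨codeRestrict_le, suppD_codeRestrict_subset.trans hXY⟩

theorem suppD_mono : Monotone (suppD (F := F) (n := n)) :=
  fun _ _ hD => (le_codeRestrict_iff.1 (hD.trans (le_codeRestrict_suppD le_rfl))).2

theorem wt_codeRestrict_le_card : wt (codeRestrict C X) ≤ X.card :=
  Finset.card_le_card suppD_codeRestrict_subset

theorem dC_finrank_le_wt (hD : D ≤ C) : dC C (Module.finrank F D) ≤ wt D :=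
  Nat.sInf_le ⟨D, hD, rfl, rfl⟩

theorem codeRestrict_eq_spanSubset_inf (C : Submodule F (Fin n → F)) (X : Finset (Fin n)) :
    codeRestrict C X = Pi.spanSubset F (X : Set (Fin n)) ⊓ C := by
  ext c
  rw [Submodule.mem_inf, Pi.mem_spanSubset_iff, and_comm]
  rfl

end Code

section Matroid

variable {F : Type*} [Field F] {m n r : ℕ} {H : Matrix (Fin m) (Fin n) F}
  {D : Submodule F (Fin n → F)} {X Y : Finset (Fin n)}

theorem colRank_mono (H : Matrix (Fin m) (Fin n) F) : Monotone (colRank H) :=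
  fun _ _ hXY => Submodule.finrank_mono (Submodule.span_mono (Set.image_mono hXY))

theorem colRank_add_finrank_codeRestrict (H : Matrix (Fin m) (Fin n) F) (X : Finset (Fin n)) :
    colRank H X + Module.finrank F (codeRestrict (codeOf H) X) = X.card := by
  have rank_nullity := finrank_map_add_finrank_inf_ker H.mulVecLin (Pi.spanSubset F (X : Set _))
  rwa [map_mulVecLin_spanSubset, Pi.dim_spanSubset, Set.ncard_coe_finset, ← codeOf,
    ← codeRestrict_eq_spanSubset_inf] at rank_nullity

theorem nulC_eq_finrank_codeRestrict (H : Matrix (Fin m) (Fin n) F) (X : Finset (Fin n)) :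
    nulC H X = Module.finrank F (codeRestrict (codeOf H) X) := by
  rw [nulC, ← colRank_add_finrank_codeRestrict H X, Nat.add_sub_cancel_left]

theorem nulC_le_nulC_erase_add_one (H : Matrix (Fin m) (Fin n) F) (X : Finset (Fin n))
    (x : Fin n) : nulC H X ≤ nulC H (X.erase x) + 1 := by
  have rank_erase_le : colRank H (X.erase x) ≤ colRank H X :=
    colRank_mono H (Finset.erase_subset x X)
  have card_le : X.card ≤ (X.erase x).card + 1 :=
    Nat.sub_le_iff_le_add.1 Finset.pred_card_le_card_erase
  unfold nulC
  omega

theorem exists_subset_nulC_eq (h : r ≤ nulC H X) : ∃ Y ⊆ X, nulC H Y = r := by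
  induction X using Finset.strongInduction with
  | H X ih =>
    rcases h.eq_or_lt with heq | hlt
    · exact ⟨X, Subset.rfl, heq.symm⟩
    obtain ⟨x, hx⟩ : X.Nonempty := Finset.card_pos.1 <|
      (Nat.zero_lt_of_lt hlt).trans_le (Nat.sub_le _ _)
    have h_erase : r ≤ nulC H (X.erase x) :=
      Nat.le_of_lt_succ (hlt.trans_le (nulC_le_nulC_erase_add_one H X x))
    obtain ⟨Y, hY, hYr⟩ := ih (X.erase x) (Finset.erase_ssubset hx) h_erase
    exact ⟨Y, hY.trans (Finset.erase_subset x X), hYr⟩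

theorem exists_subset_suppD_nulC_eq_finrank (hD : D ≤ codeOf H) :
    ∃ X ⊆ suppD D, nulC H X = Module.finrank F D := by
  apply exists_subset_nulC_eq
  rw [nulC_eq_finrank_codeRestrict]
  exact Submodule.finrank_mono (le_codeRestrict_suppD hD)

theorem dC_codeOf_eq_dM (H : Matrix (Fin m) (Fin n) F) (r : ℕ) : dC (codeOf H) r = dM H r := by
  apply csInf_eq_csInf_of_forall_exists_le
  · rintro _ ⟨D, hD, rfl, rfl⟩
    obtain ⟨X, hX, hXD⟩ := exists_subset_suppD_nulC_eq_finrank hD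
    exact ⟨X.card, ⟨X, hXD, rfl⟩, Finset.card_le_card hX⟩
  · rintro _ ⟨X, rfl, rfl⟩
    exact ⟨_, ⟨codeRestrict (codeOf H) X, codeRestrict_le,
      (nulC_eq_finrank_codeRestrict H X).symm, rfl⟩, wt_codeRestrict_le_card⟩

/-- `X` computes `d_r(M_C)`: `X ∈ N_r` and `|X| = d_r(M_C)`. This is the matroid counterpart of
`Computes`. -/
def ComputesMatroid (H : Matrix (Fin m) (Fin n) F) (r : ℕ) (X : Finset (Fin n)) : Prop :=
  (nulC H X = r ∧ ∀ Y ⊆ X, nulC H Y = r → Y = X) ∧ X.card = dM H r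

theorem eq_of_subset_of_card_eq_dM (hX : X.card = dM H r) (hYX : Y ⊆ X) (hY : nulC H Y = r) :
    Y = X :=
  Finset.eq_of_subset_of_card_le hYX (hX.trans_le (Nat.sInf_le ⟨Y, hY, rfl⟩))

theorem computesMatroid_suppD (h : Computes (codeOf H) r D) : ComputesMatroid H r (suppD D) := by
  obtain ⟨hD, rfl, hwt⟩ := h
  have hcard : (suppD D).card = dM H (Module.finrank F D) := hwt.trans (dC_codeOf_eq_dM H _)
  obtain ⟨X, hX, hXD⟩ := exists_subset_suppD_nulC_eq_finrank hD
  obtain rfl : X = suppD D := eq_of_subset_of_card_eq_dM hcard hX hXD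
  exact ⟨⟨hXD, fun _ => eq_of_subset_of_card_eq_dM hcard⟩, hcard⟩

theorem computes_codeRestrict (h : ComputesMatroid H r X) :
    Computes (codeOf H) r (codeRestrict (codeOf H) X) := by
  obtain ⟨⟨hX, -⟩, hcard⟩ := h
  have hdim : Module.finrank F (codeRestrict (codeOf H) X) = r :=
    (nulC_eq_finrank_codeRestrict H X).symm.trans hX
  refine ⟨codeRestrict_le, hdim, le_antisymm ?_ ?_⟩
  · rw [dC_codeOf_eq_dM, ← hcard]
    exact wt_codeRestrict_le_card
  · simpa only [hdim] using dC_finrank_le_wt (codeRestrict_le (C := codeOf H) (X := X))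

end Matroid

theorem statement16_general {F : Type*} [Field F] {m n : ℕ} (H : Matrix (Fin m) (Fin n) F)
    (k : ℕ) : ChainedCode (codeOf H) k ↔ ChainedMatroidC H k := by
  constructor
  · rintro ⟨D, hD_mono, hD⟩
    exact ⟨suppD ∘ D, suppD_mono.comp hD_mono, fun i => computesMatroid_suppD (hD i)⟩
  · rintro ⟨σ, hσ_mono, hσ⟩
    exact ⟨codeRestrict (codeOf H) ∘ σ, (codeRestrict_mono _).comp hσ_mono,
      fun i => computes_codeRestrict (hσ i)⟩

/-- an `[n,k]` linear code `C` is chained if and only if its associated matroid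
`M_C` is chained. -/
theorem statement16 {F : Type*} [Field F] [Fintype F] {m k n : ℕ} (hmk : m + k = n)
    (H : Matrix (Fin m) (Fin n) F) (hH : H.rank = m) :
    ChainedCode (codeOf H) k ↔ ChainedMatroidC H k :=
  statement16_general H k

end
end

section
/- A matroid M is chained if and only if its dual matroid M̄ is chained. -/
/-!
Call a set optimal if no set of the same size has larger nullity, and a chain of sets optimal if it
has an optimal member of every size. A matroid is chained exactly when it has an optimal chain. If
`σ_1 ⊆ ⋯ ⊆ σ_k` realises the weights, then every member of size at least `d_i` of a maximal chain
through the `σ_i` contains `σ_i` and hence has nullity at least `i`. Conversely, the members of size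
`d_i` of an optimal chain realise the weights: their nullity is at least `i`, and no more because
`d_i < d_{i+1}`. Since `n̄(E∖X) = r(E) - r(X)` and `r(X) = |X| - n(X)`, complements of optimal sets
are optimal for the dual, so the complements of an optimal chain form an optimal chain of the dual.
-/

open Finset

/-- A matroid on ground set `Fin n`, given by its rank function. -/
structure MatroidRk (n : ℕ) where
  r : Finset (Fin n) → ℕ
  r_le_card : ∀ X, r X ≤ X.card
  r_mono : ∀ ⦃X Y : Finset (Fin n)⦄, X ⊆ Y → r X ≤ r Y
  r_submod : ∀ X Y, r (X ∩ Y) + r (X ∪ Y) ≤ r X + r Y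

namespace MatroidRk

variable {n : ℕ}

/-- The nullity function `n(X) = |X| - r(X)`. -/
def nul (M : MatroidRk n) (X : Finset (Fin n)) : ℕ := X.card - M.r X

/-- `X ∈ N_i`: `X` is inclusion-minimal among the subsets of nullity `i`. -/
def Nmin (M : MatroidRk n) (i : ℕ) (X : Finset (Fin n)) : Prop :=
  M.nul X = i ∧ ∀ Y ⊆ X, M.nul Y = i → Y = X

/-- Membership in `Σ`: a chain `σ₁ ⊊ ⋯ ⊊ σ_k` with `σ_i ∈ 𝒩_i`. -/
def SigmaChain (M : MatroidRk n) (k : ℕ) (σ : Fin k → Finset (Fin n)) : Prop :=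
  StrictMono σ ∧ ∀ i : Fin k, M.nul (σ i) = (i : ℕ) + 1

/-- Membership in `Σ'`: a chain `σ₁ ⊊ ⋯ ⊊ σ_k` with `σ_i ∈ N_i`. -/
def SigmaChain' (M : MatroidRk n) (k : ℕ) (σ : Fin k → Finset (Fin n)) : Prop :=
  StrictMono σ ∧ ∀ i : Fin k, M.Nmin ((i : ℕ) + 1) (σ i)

/-- The set `{e(S) : S ∈ Σ}` of tuples of cardinalities of chains in `Σ`. -/
def eSet (M : MatroidRk n) (k : ℕ) : Set (Fin k → ℕ) :=
  {u | ∃ σ : Fin k → Finset (Fin n), M.SigmaChain k σ ∧ ∀ i, (σ i).card = u i}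

/-- The set `{e(S) : S ∈ Σ'}`. -/
def eSet' (M : MatroidRk n) (k : ℕ) : Set (Fin k → ℕ) :=
  {u | ∃ σ : Fin k → Finset (Fin n), M.SigmaChain' k σ ∧ ∀ i, (σ i).card = u i}

/-- The generalized Hamming weight `d_i = min {|σ| : σ ∈ 𝒩_i}`. -/
noncomputable def dW (M : MatroidRk n) (i : ℕ) : ℕ :=
  sInf {c | ∃ X, M.nul X = i ∧ X.card = c}

end MatroidRk

/-- `w` is the lexicographically smallest element of `A`. -/
def IsLexMin {k : ℕ} (A : Set (Fin k → ℕ)) (w : Fin k → ℕ) : Prop :=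
  w ∈ A ∧ ∀ u ∈ A, toLex w ≤ toLex u

/-- `w` is the reverse-lexicographically smallest element of `A`. -/
def IsRevLexMin {k : ℕ} (A : Set (Fin k → ℕ)) (w : Fin k → ℕ) : Prop :=
  w ∈ A ∧ ∀ u ∈ A, toLex (w ∘ Fin.rev) ≤ toLex (u ∘ Fin.rev)

namespace MatroidRk

/-- The rank function of the dual matroid: `r̄(X) = |X| + r(E∖X) - r(E)`. -/
def rDual {n : ℕ} (M : MatroidRk n) (X : Finset (Fin n)) : ℕ :=
  X.card + M.r Xᶜ - M.r Finset.univ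

/-- The nullity function of the dual matroid: `n̄(X) = |X| - r̄(X)`. -/
def nulDual {n : ℕ} (M : MatroidRk n) (X : Finset (Fin n)) : ℕ :=
  X.card - M.rDual X

end MatroidRk

namespace MatroidRk

/-- A matroid (of rank `n-k`) is chained if there is a chain `σ_1 ⊆ ⋯ ⊆ σ_k` with
`σ_i ∈ N_i` and `|σ_i| = d_i` for every `i`. -/
def Chained {n : ℕ} (M : MatroidRk n) (k : ℕ) : Prop :=
  ∃ σ : Fin k → Finset (Fin n), Monotone σ ∧
    ∀ i : Fin k, M.Nmin ((i : ℕ) + 1) (σ i) ∧ (σ i).card = M.dW ((i : ℕ) + 1)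

/-- The CEZ greedy weights of a matroid: `g_1 = d_1` and for `i ≥ 2`,
`g_i = min {|σ| : σ ∈ 𝒩_i, ∃ τ ∈ 𝒩_{i-1}, τ ⊆ σ, |τ| = d_{i-1}}`. -/
noncomputable def gW {n : ℕ} (M : MatroidRk n) (i : ℕ) : ℕ :=
  if i ≤ 1 then M.dW 1
  else sInf {c | ∃ X, M.nul X = i ∧
    (∃ Y, M.nul Y = i - 1 ∧ Y ⊆ X ∧ Y.card = M.dW (i - 1)) ∧ X.card = c}

end MatroidRk

namespace MatroidRk

/-- `X ∈ N̄_i`: inclusion-minimal among subsets of dual nullity `i`. -/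
def NminDual {n : ℕ} (M : MatroidRk n) (i : ℕ) (X : Finset (Fin n)) : Prop :=
  M.nulDual X = i ∧ ∀ Y ⊆ X, M.nulDual Y = i → Y = X

/-- The generalized Hamming weights of the dual matroid. -/
noncomputable def dWDual {n : ℕ} (M : MatroidRk n) (i : ℕ) : ℕ :=
  sInf {c | ∃ X, M.nulDual X = i ∧ X.card = c}

/-- The dual matroid is chained (it has rank `k`, hence `n - k` weights). -/
def ChainedDual {n : ℕ} (M : MatroidRk n) (l : ℕ) : Prop :=
  ∃ σ : Fin l → Finset (Fin n), Monotone σ ∧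
    ∀ j : Fin l, M.NminDual ((j : ℕ) + 1) (σ j) ∧ (σ j).card = M.dWDual ((j : ℕ) + 1)

end MatroidRk

section FinsetChain

variable {E : Type*}

lemma subset_of_mem_isChain_of_card_le {C : Set (Finset E)} (hC : IsChain (· ⊆ ·) C)
    {A B : Finset E} (hA : A ∈ C) (hB : B ∈ C) (hAB : #A ≤ #B) : A ⊆ B :=
  (hC.total hA hB).elim id fun hBA => (eq_of_subset_of_card_le hBA hAB).superset

lemma exists_mem_flag_card_eq [Fintype E] (F : Flag (Finset E)) {j : ℕ}
    (hj : j ≤ Fintype.card E) : ∃ A ∈ F, #A = j := by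
  induction j with
  | zero => exact ⟨∅, F.bot_mem, card_empty⟩
  | succ j ih =>
    obtain ⟨A, hA, hAj⟩ := ih (by omega)
    have hmax : ¬ IsMax (⟨A, hA⟩ : F) := by
      rw [← Flag.isMax_coe, isMax_iff_eq_top]
      rintro rfl
      rw [top_eq_univ, card_univ] at hAj
      omega
    obtain ⟨B, hB⟩ := exists_covBy_of_wellFoundedLT hmax
    refine ⟨B, B.2, ?_⟩
    rw [← Nat.covBy_iff_add_one_eq.mp (Flag.coe_covBy_coe.mpr hB).card_finset, hAj]

end FinsetChain

/-- A demi-matroid on `E`: a rank function with the unit-increase property of a matroid rank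
function, without submodularity. Generalized Hamming weights and duality make sense in this
generality. -/
@[ext]
structure DemiMatroid (E : Type*) [DecidableEq E] where
  rk : Finset E → ℕ
  rk_empty : rk ∅ = 0
  rk_mono : Monotone rk
  rk_insert_le : ∀ a X, rk (insert a X) ≤ rk X + 1

namespace DemiMatroid

variable {E : Type*} [DecidableEq E]

section Nullity

variable (D : DemiMatroid E) {X : Finset E} {i : ℕ}

/-- The nullity of a set, the number of elements by which its size exceeds its rank. The
subtraction never truncates, by `rk_le_card`. -/
def nullity (X : Finset E) : ℕ := #X - D.rk X

/-- The generalized Hamming weight `d_i`, with the junk value `0` if no set has nullity `i`. -/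
noncomputable def weight (i : ℕ) : ℕ := sInf {c | ∃ X, D.nullity X = i ∧ #X = c}

lemma rk_union_le (X Y : Finset E) : D.rk (X ∪ Y) ≤ D.rk X + #Y := by
  induction Y using Finset.induction_on with
  | empty => simp
  | insert a Y ha ih =>
    have := D.rk_insert_le a (X ∪ Y)
    rw [union_insert, card_insert_of_notMem ha]
    omega

lemma rk_le_card (X : Finset E) : D.rk X ≤ #X := by
  simpa [D.rk_empty] using D.rk_union_le ∅ X

lemma nullity_add_rk (X : Finset E) : D.nullity X + D.rk X = #X :=
  Nat.sub_add_cancel (D.rk_le_card X)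

lemma nullity_empty : D.nullity ∅ = 0 := by
  simp [nullity]

lemma nullity_mono : Monotone D.nullity := by
  intro X Y hXY
  have hrk : D.rk Y ≤ D.rk X + #(Y \ X) := by
    simpa only [union_sdiff_of_subset hXY] using D.rk_union_le X (Y \ X)
  have hX := D.nullity_add_rk X
  have hY := D.nullity_add_rk Y
  have hcard := card_sdiff_add_card_eq_card hXY
  omega

lemma nullity_insert_le (a : E) (X : Finset E) : D.nullity (insert a X) ≤ D.nullity X + 1 := by
  have hX := D.nullity_add_rk X
  have hinsert := D.nullity_add_rk (insert a X)
  have hcard := card_insert_le a X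
  have hrk := D.rk_mono (subset_insert a X)
  omega

variable {D}

lemma exists_subset_nullity_eq (hi : i ≤ D.nullity X) : ∃ Y ⊆ X, D.nullity Y = i := by
  induction X using Finset.induction_on with
  | empty => exact ⟨∅, Subset.rfl, by have := D.nullity_empty; omega⟩
  | insert a X _ ih =>
    obtain hX | hX := le_or_gt i (D.nullity X)
    · obtain ⟨Y, hY, rfl⟩ := ih hX
      exact ⟨Y, hY.trans (subset_insert a X), rfl⟩
    · exact ⟨insert a X, Subset.rfl, le_antisymm ((D.nullity_insert_le a X).trans hX) hi⟩

lemma weight_le_card (hi : i ≤ D.nullity X) : D.weight i ≤ #X := by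
  obtain ⟨Y, hYX, hY⟩ := exists_subset_nullity_eq hi
  have hle : D.weight i ≤ #Y := Nat.sInf_le ⟨Y, hY, rfl⟩
  exact hle.trans (card_le_card hYX)

lemma weight_lt_card (hi : i < D.nullity X) : D.weight i < #X := by
  obtain ⟨a, ha⟩ : X.Nonempty := by
    rw [nonempty_iff_ne_empty]
    rintro rfl
    simp [D.nullity_empty] at hi
  have herase : i ≤ D.nullity (X.erase a) := by
    have := D.nullity_insert_le a (X.erase a)
    rw [insert_erase ha] at this
    omega
  exact (weight_le_card herase).trans_lt (card_erase_lt_of_mem ha)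

lemma exists_card_eq_weight (hi : i ≤ D.nullity X) :
    ∃ Y, D.nullity Y = i ∧ #Y = D.weight i := by
  obtain ⟨Y, -, hY⟩ := exists_subset_nullity_eq hi
  exact Nat.sInf_mem (s := {c | ∃ Z, D.nullity Z = i ∧ #Z = c}) ⟨#Y, Y, hY, rfl⟩

lemma eq_of_subset_of_card_eq_weight {Y : Finset E} (hX : #X = D.weight i) (hYX : Y ⊆ X)
    (hY : D.nullity Y = i) : Y = X :=
  eq_of_subset_of_card_le hYX (hX ▸ weight_le_card hY.ge)

end Nullity

section OptimalChain

variable [Fintype E]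

/-- A demi-matroid is chained if its generalized Hamming weights are all attained along a single
chain `σ_1 ⊆ ⋯ ⊆ σ_k`, where `k` is the nullity of the ground set. The paper's `σ_i` is `σ` at the
index `i - 1`. -/
def IsChained (D : DemiMatroid E) : Prop :=
  ∃ σ : Fin (D.nullity univ) → Finset E, Monotone σ ∧
    ∀ i, (D.nullity (σ i) = i + 1 ∧ ∀ Y ⊆ σ i, D.nullity Y = i + 1 → Y = σ i) ∧
      #(σ i) = D.weight (i + 1)

/-- A set is optimal if it has the largest nullity among the sets of its size. -/
def IsOptimal (D : DemiMatroid E) (A : Finset E) : Prop :=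
  ∀ X, #X = #A → D.nullity X ≤ D.nullity A

/-- The existence of a chain with an optimal member of every size. This reformulates chainedness in
a way that is visibly invariant under duality. -/
def HasOptimalChain (D : DemiMatroid E) : Prop :=
  ∃ C : Set (Finset E), IsChain (· ⊆ ·) C ∧
    ∀ j ≤ Fintype.card E, ∃ A ∈ C, #A = j ∧ D.IsOptimal A

variable {D : DemiMatroid E} {A : Finset E}

lemma IsOptimal.nullity_eq {i : ℕ} (hA : D.IsOptimal A) (hcard : #A = D.weight i)
    (hi : i ≤ D.nullity univ) : D.nullity A = i := by
  obtain ⟨X, rfl, hX⟩ := exists_card_eq_weight hi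
  refine le_antisymm ?_ (hA X (hX.trans hcard.symm))
  by_contra! hlt
  exact (weight_lt_card hlt).ne' hcard

lemma IsChained.hasOptimalChain (h : D.IsChained) : D.HasOptimalChain := by
  obtain ⟨σ, hσ, hweight⟩ := h
  obtain ⟨F, hF⟩ := hσ.isChain_range.exists_subset_flag
  refine ⟨F, F.chain_le, fun j hj => ?_⟩
  obtain ⟨A, hA, hAj⟩ := exists_mem_flag_card_eq F hj
  refine ⟨A, hA, hAj, fun X hX => ?_⟩
  obtain hzero | hpos := (D.nullity X).eq_zero_or_pos
  · omega
  · have hle : D.nullity X ≤ D.nullity univ := D.nullity_mono (subset_univ X)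
    let i : Fin (D.nullity univ) := ⟨D.nullity X - 1, by omega⟩
    have hi : (i : ℕ) + 1 = D.nullity X := Nat.sub_add_cancel hpos
    have hcard : #(σ i) ≤ #A := by
      rw [(hweight i).2, ← hX]
      exact weight_le_card hi.le
    have hsub : σ i ⊆ A :=
      subset_of_mem_isChain_of_card_le F.chain_le (hF ⟨i, rfl⟩) hA hcard
    calc D.nullity X = D.nullity (σ i) := by rw [(hweight i).1.1, hi]
      _ ≤ D.nullity A := D.nullity_mono hsub

lemma HasOptimalChain.isChained (h : D.HasOptimalChain) : D.IsChained := by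
  obtain ⟨C, hC, hopt⟩ := h
  have hle (i : Fin (D.nullity univ)) : (i : ℕ) + 1 ≤ D.nullity univ := i.isLt
  choose σ hσC hcard hσopt using fun i : Fin (D.nullity univ) =>
    hopt (D.weight (i + 1)) (weight_le_card (hle i))
  have hnullity (i) : D.nullity (σ i) = i + 1 := (hσopt i).nullity_eq (hcard i) (hle i)
  refine ⟨σ, fun i j hij => ?_, fun i => ⟨⟨hnullity i, fun Y hY => ?_⟩, hcard i⟩⟩
  · refine subset_of_mem_isChain_of_card_le hC (hσC i) (hσC j) ?_
    rw [hcard i]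
    exact weight_le_card ((hnullity j).symm ▸ Nat.succ_le_succ hij)
  · exact eq_of_subset_of_card_eq_weight (hcard i) hY

lemma isChained_iff_hasOptimalChain : D.IsChained ↔ D.HasOptimalChain :=
  ⟨IsChained.hasOptimalChain, HasOptimalChain.isChained⟩

end OptimalChain

section Dual

variable [Fintype E] (D : DemiMatroid E) {A : Finset E}

lemma rk_univ_le (X : Finset E) : D.rk univ ≤ #X + D.rk Xᶜ := by
  have := D.rk_union_le Xᶜ X
  rw [union_comm, union_compl] at this
  omega

/-- The dual demi-matroid, with the rank function `r̄(X) = |X| + r(E∖X) - r(E)` of the dual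
matroid. The subtraction never truncates, by `rk_univ_le`. -/
def dual : DemiMatroid E where
  rk X := #X + D.rk Xᶜ - D.rk univ
  rk_empty := by simp
  rk_mono X Y hXY := by
    have hcompl : Xᶜ ⊆ Yᶜ ∪ Y \ X := by
      intro a
      simp only [mem_compl, mem_union, mem_sdiff]
      tauto
    have hrk : D.rk Xᶜ ≤ D.rk Yᶜ + #(Y \ X) :=
      (D.rk_mono hcompl).trans (D.rk_union_le Yᶜ (Y \ X))
    have hcard := card_sdiff_add_card_eq_card hXY
    exact Nat.sub_le_sub_right (by omega) _
  rk_insert_le a X := by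
    have hrk : D.rk (insert a X)ᶜ ≤ D.rk Xᶜ :=
      D.rk_mono (compl_subset_compl.mpr (subset_insert a X))
    have hcard := card_insert_le a X
    omega

lemma dual_rk_add (X : Finset E) : D.dual.rk X + D.rk univ = #X + D.rk Xᶜ :=
  Nat.sub_add_cancel (D.rk_univ_le X)

lemma dual_dual : D.dual.dual = D := by
  ext X
  have hX := D.dual.dual_rk_add X
  have hcompl := D.dual_rk_add Xᶜ
  have huniv := D.dual_rk_add univ
  have hcard := card_add_card_compl X
  rw [compl_compl] at hcompl
  rw [compl_univ, rk_empty, card_univ] at huniv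
  omega

lemma dual_nullity_add_rk_compl (X : Finset E) : D.dual.nullity X + D.rk Xᶜ = D.rk univ := by
  have hdual := D.dual.nullity_add_rk X
  have hrk := D.dual_rk_add X
  omega

lemma dual_nullity_univ : D.dual.nullity univ = D.rk univ := by
  simpa [D.rk_empty] using D.dual_nullity_add_rk_compl univ

variable {D}

lemma IsOptimal.compl (hA : D.IsOptimal A) : D.dual.IsOptimal Aᶜ := by
  intro X hX
  have hcard : #Xᶜ = #A := by
    rw [card_compl, hX, card_compl, Nat.sub_sub_self (card_le_univ A)]
  have hnullity : D.nullity Xᶜ ≤ D.nullity A := hA Xᶜ hcard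
  have hrkX := D.nullity_add_rk Xᶜ
  have hrkA := D.nullity_add_rk A
  have hdualX := D.dual_nullity_add_rk_compl X
  have hdualA := D.dual_nullity_add_rk_compl Aᶜ
  rw [compl_compl] at hdualA
  omega

lemma HasOptimalChain.dual (h : D.HasOptimalChain) : D.dual.HasOptimalChain := by
  obtain ⟨C, hC, hopt⟩ := h
  refine ⟨(·ᶜ) '' C, ?_, fun j hj => ?_⟩
  · exact hC.symm.image_of_map_rel _ _ _ fun _ _ hAB => compl_subset_compl.mpr hAB
  · obtain ⟨A, hAC, hAj, hA⟩ := hopt (Fintype.card E - j) (Nat.sub_le _ _)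
    refine ⟨Aᶜ, ⟨A, hAC, rfl⟩, ?_, hA.compl⟩
    rw [card_compl, hAj, Nat.sub_sub_self hj]

end Dual

end DemiMatroid

namespace MatroidRk

variable {n : ℕ} (M : MatroidRk n)

/-- The demi-matroid obtained from a matroid by forgetting submodularity. Nullity, dual and weights
of `M` are by definition those of `M.toDemiMatroid`. -/
def toDemiMatroid : DemiMatroid (Fin n) where
  rk := M.r
  rk_empty := Nat.le_zero.mp (M.r_le_card ∅)
  rk_mono := M.r_mono
  rk_insert_le a X := by
    have hsubmod := M.r_submod {a} X
    have hsingleton : M.r {a} ≤ 1 := M.r_le_card {a}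
    rw [insert_eq]
    omega

lemma toDemiMatroid_nullity_univ : M.toDemiMatroid.nullity univ = n - M.r univ := by
  rw [DemiMatroid.nullity, card_univ, Fintype.card_fin]
  rfl

lemma chained_iff_isChained : M.Chained (n - M.r univ) ↔ M.toDemiMatroid.IsChained := by
  rw [← toDemiMatroid_nullity_univ]
  rfl

lemma chainedDual_iff_isChained : M.ChainedDual (M.r univ) ↔ M.toDemiMatroid.dual.IsChained := by
  have hrk : M.toDemiMatroid.dual.nullity univ = M.r univ := M.toDemiMatroid.dual_nullity_univ
  rw [← hrk]
  rfl

end MatroidRk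

theorem statement17_general {E : Type*} [Fintype E] [DecidableEq E] (D : DemiMatroid E) :
    D.IsChained ↔ D.dual.IsChained := by
  simp only [DemiMatroid.isChained_iff_hasOptimalChain]
  exact ⟨.dual, fun h => D.dual_dual ▸ h.dual⟩

open MatroidRk in
/-- a matroid is chained if and only if its dual matroid is chained. -/
theorem statement17 {n k : ℕ} (M : MatroidRk n) (hrk : M.r Finset.univ + k = n) :
    M.Chained k ↔ M.ChainedDual (n - k) := by
  rw [show n - k = M.r univ by omega, show k = n - M.r univ by omega,
    chained_iff_isChained, chainedDual_iff_isChained, statement17_general]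
end

section
/- Let M be a matroid on a finite ground set E, let 1 ≤ l ≤ |E| − r(E), let ρ ∈ N_{l−1} (where N_0 = {∅}) and μ ∈ N_l. Then ρ ⊆ μ if and only if there exists a circuit τ of M such that μ = ρ ∪ τ. -/
open Finset

namespace MatroidRk

/-- A circuit: an inclusion-minimal dependent set. -/
def Circuit {n : ℕ} (M : MatroidRk n) (X : Finset (Fin n)) : Prop :=
  M.nul X ≠ 0 ∧ ∀ Y ⊂ X, M.nul Y = 0

end MatroidRk

/-!
A circuit `C ⊈ Y` meets `Y` in an independent set, so supermodularity of the nullity shows that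
adjoining `C` to `Y` raises the nullity. Hence it suffices to find a circuit `τ ⊆ μ` with `τ ⊈ ρ`:
then `ρ ∪ τ ⊆ μ` already has the nullity of `μ`, and minimality forces equality. Such a `τ` exists
as soon as `ρ` has smaller nullity than `μ`: a circuit of `μ` inside `ρ` can be destroyed by
deleting one of its elements, which lowers the nullity of `ρ` by at least one and that of `μ` by at
most one, so the inequality persists.
-/

namespace MatroidRk

variable {n : ℕ} (M : MatroidRk n)

theorem nul_add_r (X : Finset (Fin n)) : M.nul X + M.r X = X.card :=
  Nat.sub_add_cancel (M.r_le_card X)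

theorem nul_add_nul_le_nul_inter_add_nul_union (X Y : Finset (Fin n)) :
    M.nul X + M.nul Y ≤ M.nul (X ∩ Y) + M.nul (X ∪ Y) := by
  have hr := M.r_submod X Y
  have hcard := card_union_add_card_inter X Y
  simp only [← M.nul_add_r] at hcard
  omega

theorem nul_empty : M.nul ∅ = 0 := by
  simp [nul]

theorem nul_mono : Monotone M.nul := by
  intro X Y hXY
  have hsup := M.nul_add_nul_le_nul_inter_add_nul_union X (Y \ X)
  rw [inter_sdiff_self, union_sdiff_of_subset hXY] at hsup
  have hempty := M.nul_empty
  omega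

theorem nul_le_nul_erase_add_one (X : Finset (Fin n)) (x : Fin n) :
    M.nul X ≤ M.nul (X.erase x) + 1 := by
  have hr := M.r_mono (erase_subset x X)
  have hcard := pred_card_le_card_erase (s := X) (a := x)
  simp only [← M.nul_add_r] at hcard
  omega

variable {M}

theorem exists_circuit_subset {X : Finset (Fin n)} (hX : M.nul X ≠ 0) :
    ∃ C ⊆ X, M.Circuit C := by
  obtain ⟨C, hCX, hC⟩ := exists_minimal_le_of_wellFoundedLT (M.nul · ≠ 0) X hX
  exact ⟨C, hCX, hC.prop, fun _ hY ↦ not_not.1 (hC.not_prop_of_lt hY)⟩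

theorem Circuit.nul_lt_nul_union {C Y : Finset (Fin n)} (hC : M.Circuit C) (hCY : ¬C ⊆ Y) :
    M.nul Y < M.nul (Y ∪ C) := by
  have hinter : M.nul (Y ∩ C) = 0 :=
    hC.2 _ (inter_subset_right.ssubset_of_ne fun h ↦ hCY (inter_eq_right.1 h))
  have hsup := M.nul_add_nul_le_nul_inter_add_nul_union Y C
  have hdep := hC.1
  omega

theorem Circuit.nul_erase_lt_nul {C Y : Finset (Fin n)} {y : Fin n} (hC : M.Circuit C)
    (hCY : C ⊆ Y) (hy : y ∈ C) : M.nul (Y.erase y) < M.nul Y :=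
  (hC.nul_lt_nul_union fun h ↦ notMem_erase y Y (h hy)).trans_le
    (M.nul_mono (union_subset (erase_subset y Y) hCY))

theorem Circuit.nonempty {C : Finset (Fin n)} (hC : M.Circuit C) : C.Nonempty := by
  rw [nonempty_iff_ne_empty]
  rintro rfl
  exact hC.1 M.nul_empty

theorem exists_circuit_subset_not_subset {X Y : Finset (Fin n)} (hXY : M.nul Y < M.nul X) :
    ∃ C ⊆ X, M.Circuit C ∧ ¬C ⊆ Y := by
  induction X using Finset.strongInduction generalizing Y with
  | H X ih =>
    obtain ⟨C, hCX, hC⟩ := exists_circuit_subset (Nat.ne_zero_of_lt hXY)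
    by_cases hCY : C ⊆ Y
    · obtain ⟨y, hy⟩ := hC.nonempty
      have herase : M.nul (Y.erase y) < M.nul (X.erase y) := by
        have hY := hC.nul_erase_lt_nul hCY hy
        have hX := M.nul_le_nul_erase_add_one X y
        omega
      obtain ⟨D, hDX, hD, hDY⟩ := ih (X.erase y) (erase_ssubset (hCX hy)) herase
      have hyD : y ∉ D := fun h ↦ notMem_erase y X (hDX h)
      exact ⟨D, hDX.trans (erase_subset y X), hD, fun h ↦ hDY (subset_erase.2 ⟨h, hyD⟩)⟩
    · exact ⟨C, hCX, hC, hCY⟩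

end MatroidRk

theorem statement18_general {n : ℕ} (M : MatroidRk n) (ρ μ : Finset (Fin n))
    (hμ : M.Nmin (M.nul ρ + 1) μ) :
    ρ ⊆ μ ↔ ∃ τ : Finset (Fin n), M.Circuit τ ∧ μ = ρ ∪ τ := by
  constructor
  · intro hρμ
    obtain ⟨hnul, hmin⟩ := hμ
    have hlt : M.nul ρ < M.nul μ := by omega
    obtain ⟨τ, hτμ, hτ, hτρ⟩ := MatroidRk.exists_circuit_subset_not_subset hlt
    have hsub : ρ ∪ τ ⊆ μ := union_subset hρμ hτμ
    have hunion : M.nul (ρ ∪ τ) = M.nul ρ + 1 :=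
      le_antisymm (hnul ▸ M.nul_mono hsub) (hτ.nul_lt_nul_union hτρ)
    exact ⟨τ, hτ, (hmin _ hsub hunion).symm⟩
  · rintro ⟨τ, -, rfl⟩
    exact subset_union_left

open MatroidRk in
/-- for `1 ≤ l ≤ |E| - r(E)`, `ρ ∈ N_{l-1}` and `μ ∈ N_l`, one has `ρ ⊆ μ` if
and only if `μ = ρ ∪ τ` for some circuit `τ` of `M`. (Here `N_0 = {∅}`, which is exactly the
set of inclusion-minimal subsets of nullity `0`.) -/
theorem statement18 {n : ℕ} (M : MatroidRk n) (l : ℕ) (hl1 : 1 ≤ l)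
    (hl : l ≤ n - M.r Finset.univ)
    (ρ μ : Finset (Fin n)) (hρ : M.Nmin (l - 1) ρ) (hμ : M.Nmin l μ) :
    ρ ⊆ μ ↔ ∃ τ : Finset (Fin n), M.Circuit τ ∧ μ = ρ ∪ τ :=
  statement18_general M ρ μ (by rwa [hρ.1, Nat.sub_add_cancel hl1])
end

section
/- Let M be a matroid of rank n−k on a ground set E of cardinality n. Suppose that for every 1 ≤ i ≤ k, all elements of N_i have the same cardinality (this hypothesis is equivalent to the Stanley–Reisner ring of the independence complex of M having a pure minimal free resolution). Then M is chained. -/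
open Finset

/-! Nullity starts at `0` and grows by at most one with each added element, so a set of nullity
`i + 1` contains a set of nullity `i`, and hence a minimal one. Descending from a set of nullity `k`
gives a chain of minimal sets `σ₁ ⊆ ⋯ ⊆ σ_k`. Every set of nullity `i` contains a minimal one, so
when all minimal sets of nullity `i` have the same size, that size is `d_i`. -/

section Order

variable {α β : Type*} [Preorder α] [WellFoundedLT α] [Preorder β]

theorem exists_monotone_minimal_le {P : ℕ → α → Prop}
    (hP : ∀ i x, P (i + 1) x → ∃ y ≤ x, P i y) {m : ℕ} {x : α} (hx : P m x) :
    ∃ σ : ℕ → α, Monotone σ ∧ (∀ i, σ i ≤ x) ∧ ∀ i ≤ m, Minimal (P i) (σ i) := by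
  induction m generalizing x with
  | zero =>
    obtain ⟨y, hyx, hy⟩ := exists_minimal_le_of_wellFoundedLT (P 0) x hx
    exact ⟨fun _ => y, monotone_const, fun _ => hyx, fun i hi => by rwa [Nat.le_zero.mp hi]⟩
  | succ m ih =>
    obtain ⟨y, hyx, hy⟩ := exists_minimal_le_of_wellFoundedLT (P (m + 1)) x hx
    obtain ⟨z, hzy, hz⟩ := hP m y hy.prop
    obtain ⟨σ, hσ, hσz, hmin⟩ := ih hz
    refine ⟨fun i => if i ≤ m then σ i else y, ?_, fun i => ?_, fun i hi => ?_⟩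
    · intro i j hij
      dsimp only
      split_ifs with hi hj hj
      exacts [hσ hij, (hσz i).trans hzy, absurd (hij.trans hj) hi, le_rfl]
    · dsimp only
      split_ifs
      exacts [((hσz i).trans hzy).trans hyx, hyx]
    · dsimp only
      split_ifs with him
      · exact hmin i him
      · rwa [show i = m + 1 by omega]

theorem isLeast_image_of_forall_minimal_le {P : α → Prop} {c : α → β} (hc : Monotone c) {x : α}
    (hx : P x) (hle : ∀ y, Minimal P y → c x ≤ c y) : IsLeast (c '' {y | P y}) (c x) := by
  refine ⟨⟨x, hx, rfl⟩, ?_⟩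
  rintro _ ⟨y, hy, rfl⟩
  obtain ⟨z, hzy, hz⟩ := exists_minimal_le_of_wellFoundedLT P y hy
  exact (hle z hz).trans (hc hzy)

end Order

section UnitIncrease

variable {α : Type*} [DecidableEq α] {f : Finset α → ℕ}

theorem exists_subset_eq_of_insert_le_succ (h_insert : ∀ a s, f (insert a s) ≤ f s + 1)
    {j : ℕ} {s : Finset α} (hj : f ∅ ≤ j) (hjs : j ≤ f s) : ∃ t ⊆ s, f t = j := by
  induction s using Finset.induction_on with
  | empty => exact ⟨∅, Subset.rfl, hj.antisymm hjs⟩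
  | insert a s _ ih =>
    obtain h_eq | h_lt := hjs.eq_or_lt
    · exact ⟨insert a s, Subset.rfl, h_eq.symm⟩
    · obtain ⟨t, hts, ht⟩ := ih (Nat.le_of_lt_succ (h_lt.trans_le (h_insert a s)))
      exact ⟨t, hts.trans (subset_insert a s), ht⟩

theorem statement19_general (h_empty : f ∅ = 0) (h_insert : ∀ a s, f (insert a s) ≤ f s + 1)
    {k : ℕ} {s : Finset α} (hk : k ≤ f s)
    (hpure : ∀ i, 1 ≤ i → i ≤ k →
      ∀ X Y : Finset α, Minimal (f · = i) X → Minimal (f · = i) Y → #X = #Y) :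
    ∃ σ : Fin k → Finset α, Monotone σ ∧ ∀ i : Fin k,
      Minimal (f · = (i : ℕ) + 1) (σ i) ∧ IsLeast (card '' {X | f X = (i : ℕ) + 1}) #(σ i) := by
  have h_subset {j : ℕ} {t : Finset α} (hj : j ≤ f t) : ∃ u ⊆ t, f u = j :=
    exists_subset_eq_of_insert_le_succ h_insert (h_empty.trans_le j.zero_le) hj
  obtain ⟨t, -, ht⟩ := h_subset hk
  obtain ⟨σ, hσ, -, hmin⟩ := exists_monotone_minimal_le (P := fun i X => f X = i)
    (fun i X hX => h_subset (i.le_succ.trans_eq hX.symm)) ht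
  refine ⟨fun i => σ (i + 1), fun i j hij => hσ (Nat.succ_le_succ hij), fun i => ?_⟩
  have hi : Minimal (f · = (i : ℕ) + 1) (σ (i + 1)) := hmin _ i.isLt
  exact ⟨hi, isLeast_image_of_forall_minimal_le card_mono hi.prop fun Y hY =>
    (hpure _ (Nat.le_add_left 1 i) i.isLt _ _ hi hY).le⟩

end UnitIncrease

namespace MatroidRk

variable {n : ℕ} (M : MatroidRk n)

theorem nul_univ : M.nul univ = n - M.r univ := by simp [nul]

theorem nul_insert_le (a : Fin n) (X : Finset (Fin n)) : M.nul (insert a X) ≤ M.nul X + 1 := by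
  have h_card := card_insert_le a X
  have h_rank := M.r_mono (subset_insert a X)
  unfold nul
  omega

theorem nmin_iff_minimal {i : ℕ} {X : Finset (Fin n)} :
    M.Nmin i X ↔ Minimal (M.nul · = i) X := by
  simp only [Nmin, minimal_iff, eq_comm (a := X)]
  exact and_congr_right fun _ => forall_congr' fun _ => forall_comm

end MatroidRk

open MatroidRk in
/-- if for every `1 ≤ i ≤ k` all elements of `N_i` have the same cardinality
(equivalently, the Stanley–Reisner ring of the independence complex of `M` has a pure minimal
free resolution), then `M` is chained. -/
theorem statement19 {n k : ℕ} (M : MatroidRk n) (hrk : M.r Finset.univ + k = n)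
    (hpure : ∀ i : ℕ, 1 ≤ i → i ≤ k →
      ∀ X Y : Finset (Fin n), M.Nmin i X → M.Nmin i Y → X.card = Y.card) :
    M.Chained k := by
  obtain ⟨σ, hσ, h⟩ := statement19_general M.nul_empty M.nul_insert_le
    (by rw [M.nul_univ]; omega : k ≤ M.nul univ) (by simpa only [nmin_iff_minimal] using hpure)
  exact ⟨σ, hσ, fun i => ⟨M.nmin_iff_minimal.2 (h i).1, (h i).2.csInf_eq.symm⟩⟩
end
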